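/- Let α, β > −1 be real numbers and n a nonnegative integer. If p and q are nonzero real polynomials that both satisfy (1−x²)·y″(x) + (β−α−(α+β+2)x)·y′(x) + n(n+α+β+1)·y(x) = 0 for all x ∈ ℝ, then p and q are linearly dependent, i.e. q = c·p for some real constant c. (Equivalently, every multiplicative polynomial solution of the multiplicative Jacobi equation is a real power of any fixed one.) -/

import Mathlib

open Polynomial

/-! At the singular point `r = 1` the Jacobi operator has indicial equation `m (m + α) = 0`, and at
`r = -1` it has `m (m + β) = 0`. Unless the relevant parameter is a negative integer, the only
exponent in `ℕ` is `0`, so a nonzero polynomial solution cannot vanish at `r`. Given two solutions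
`p ≠ 0` and `q`, the solution `q - (q(r) / p(r)) p` vanishes at `r`, and is therefore zero. -/

section SecondOrderOperator

variable {R : Type*} [CommRing R]

/-- The linear ordinary differential operator `y ↦ a y″ + b y′ + c y` with polynomial coefficients,
acting on polynomials. Its kernel is the space of polynomial solutions of the homogeneous
equation. -/
noncomputable def secondOrderOperator (a b c : R[X]) : R[X] →ₗ[R] R[X] :=
  a • derivative ∘ₗ derivative + b • derivative + c • LinearMap.id

theorem secondOrderOperator_apply (a b c y : R[X]) :
    secondOrderOperator a b c y = a * derivative (derivative y) + b * derivative y + c * y :=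
  rfl

theorem derivative_X_sub_C_pow_succ_mul (r : R) (m : ℕ) (z : R[X]) :
    derivative ((X - C r) ^ (m + 1) * z) =
      (X - C r) ^ m * (((m : R[X]) + 1) * z + (X - C r) * derivative z) := by
  simp only [derivative_mul, derivative_X_sub_C_pow, Nat.add_sub_cancel, Nat.cast_add,
    Nat.cast_one, C_add, C_1, C_eq_natCast]
  ring

theorem X_sub_C_mul_derivative_X_sub_C_pow_mul (r : R) (m : ℕ) (z : R[X]) :
    (X - C r) * derivative ((X - C r) ^ m * z) =
      (X - C r) ^ m * ((m : R[X]) * z + (X - C r) * derivative z) := by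
  cases m with
  | zero => simp
  | succ m =>
    rw [derivative_X_sub_C_pow_succ_mul, Nat.cast_succ]
    ring

theorem secondOrderOperator_X_sub_C_pow_succ_mul (r : R) (s b c : R[X]) (m : ℕ) (z : R[X]) :
    secondOrderOperator ((X - C r) * s) b c ((X - C r) ^ (m + 1) * z) =
      (X - C r) ^ m * (((m : R[X]) + 1) * (b + (m : R[X]) * s) * z +
        (X - C r) * ((2 * ((m : R[X]) + 1) * s + b) * derivative z + c * z +
          (X - C r) * s * derivative (derivative z))) := by
  rw [secondOrderOperator_apply, derivative_X_sub_C_pow_succ_mul, mul_right_comm,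
    X_sub_C_mul_derivative_X_sub_C_pow_mul]
  simp only [derivative_add, derivative_mul, derivative_natCast, derivative_one, derivative_X_sub_C]
  ring

-- The indicial polynomial at `r` is `m ↦ m * (b(r) + (m - 1) * a′(r))`.
theorem eq_zero_of_secondOrderOperator_eq_zero_of_isRoot [IsDomain R] [CharZero R]
    {a b c y : R[X]} {r : R}
    (ha : a.IsRoot r) (hindicial : ∀ k : ℕ, b.eval r + k * (derivative a).eval r ≠ 0)
    (hy : secondOrderOperator a b c y = 0) (hyr : y.IsRoot r) : y = 0 := by
  by_contra hy0
  obtain ⟨s, rfl⟩ := dvd_iff_isRoot.mpr ha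
  obtain ⟨z, hyz, hz⟩ := exists_eq_pow_rootMultiplicity_mul_and_not_dvd y hy0 r
  obtain ⟨m, hm⟩ := Nat.exists_eq_add_one.mpr ((rootMultiplicity_pos hy0).mpr hyr)
  rw [hyz, hm, secondOrderOperator_X_sub_C_pow_succ_mul] at hy
  have hquotient := congrArg (eval r)
    ((mul_eq_zero.mp hy).resolve_left (pow_ne_zero m (X_sub_C_ne_zero r)))
  have hlowest : ((m + 1 : ℕ) : R) * (b.eval r + m * s.eval r) * z.eval r = 0 := by
    simpa using hquotient
  have hs : (derivative ((X - C r) * s)).eval r = s.eval r := by simp [derivative_mul]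
  have hzr : z.eval r ≠ 0 := fun h ↦ hz (dvd_iff_isRoot.mpr h)
  exact mul_ne_zero (mul_ne_zero (Nat.cast_ne_zero.mpr m.succ_ne_zero) (hs ▸ hindicial m)) hzr
    hlowest

end SecondOrderOperator

theorem exists_eq_smul_of_secondOrderOperator_eq_zero {K : Type*} [Field K] [CharZero K]
    {a b c p q : K[X]} {r : K}
    (ha : a.IsRoot r) (hindicial : ∀ k : ℕ, b.eval r + k * (derivative a).eval r ≠ 0)
    (hp_ne : p ≠ 0) (hp : secondOrderOperator a b c p = 0)
    (hq : secondOrderOperator a b c q = 0) :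
    ∃ t : K, q = t • p := by
  have hpr : p.eval r ≠ 0 := fun hroot ↦
    hp_ne (eq_zero_of_secondOrderOperator_eq_zero_of_isRoot ha hindicial hp hroot)
  refine ⟨q.eval r / p.eval r, sub_eq_zero.mp ?_⟩
  apply eq_zero_of_secondOrderOperator_eq_zero_of_isRoot (c := c) ha hindicial
  · rw [map_sub, map_smul, hp, hq, smul_zero, sub_zero]
  · simp [IsRoot.def, hpr]

section Jacobi

variable {R : Type*} [CommRing R]

/-- The Jacobi operator `y ↦ (1 - x²) y″ + (β - α - (α + β + 2) x) y′ + μ y`, with the spectral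
value `μ` included, so that solutions are kernel elements. -/
noncomputable def jacobiOperator (α β μ : R) : R[X] →ₗ[R] R[X] :=
  secondOrderOperator (1 - X ^ 2) (C (β - α) - C (α + β + 2) * X) (C μ)

theorem jacobiOperator_eq_zero_of_forall_eval [IsDomain R] [Infinite R] {α β μ : R}
    {y : R[X]} (h : ∀ x : R,
      (1 - x ^ 2) * (derivative (derivative y)).eval x
        + (β - α - (α + β + 2) * x) * (derivative y).eval x
        + μ * y.eval x = 0) :
    jacobiOperator α β μ y = 0 :=
  Polynomial.funext fun x ↦ by
    simpa [jacobiOperator, secondOrderOperator_apply] using h x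

theorem jacobi_indicial_one (α β : R) (k : ℕ) :
    (C (β - α) - C (α + β + 2) * X).eval 1 + k * (derivative (1 - X ^ 2 : R[X])).eval 1 =
      -2 * (α + 1 + k) := by
  simp only [derivative_sub, derivative_one, derivative_X_sq, eval_sub, eval_mul, eval_C, eval_X,
    eval_zero]
  ring

theorem jacobi_indicial_neg_one (α β : R) (k : ℕ) :
    (C (β - α) - C (α + β + 2) * X).eval (-1) + k * (derivative (1 - X ^ 2 : R[X])).eval (-1) =
      2 * (β + 1 + k) := by
  simp only [derivative_sub, derivative_one, derivative_X_sq, eval_sub, eval_mul, eval_C, eval_X,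
    eval_zero]
  ring

end Jacobi

theorem jacobi_polynomial_solution_unique_general {K : Type*} [Field K] [CharZero K]
    {α β μ : K} {p q : K[X]}
    (hαβ : (∀ k : ℕ, α + 1 + k ≠ 0) ∨ ∀ k : ℕ, β + 1 + k ≠ 0) (hp : p ≠ 0)
    (hpe : ∀ x : K,
      (1 - x ^ 2) * (derivative (derivative p)).eval x
        + (β - α - (α + β + 2) * x) * (derivative p).eval x
        + μ * p.eval x = 0)
    (hqe : ∀ x : K,
      (1 - x ^ 2) * (derivative (derivative q)).eval x
        + (β - α - (α + β + 2) * x) * (derivative q).eval x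
        + μ * q.eval x = 0) :
    ∃ c : K, q = c • p := by
  have hpker := jacobiOperator_eq_zero_of_forall_eval hpe
  have hqker := jacobiOperator_eq_zero_of_forall_eval hqe
  rcases hαβ with hα | hβ
  · refine exists_eq_smul_of_secondOrderOperator_eq_zero (r := 1) (by simp) (fun k ↦ ?_) hp
      hpker hqker
    rw [jacobi_indicial_one]
    exact mul_ne_zero (neg_ne_zero.mpr two_ne_zero) (hα k)
  · refine exists_eq_smul_of_secondOrderOperator_eq_zero (r := -1) (by simp) (fun k ↦ ?_) hp
      hpker hqker
    rw [jacobi_indicial_neg_one]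
    exact mul_ne_zero two_ne_zero (hβ k)

/-- Any two nonzero polynomial solutions of the Jacobi differential
equation with parameters `α, β > −1` and spectral value `n(n+α+β+1)` are linearly
dependent: `q = c • p` for some real constant `c`. -/
theorem jacobi_polynomial_solution_unique (α β : ℝ) (hα : -1 < α) (hβ : -1 < β) (n : ℕ)
    (p q : Polynomial ℝ) (hp : p ≠ 0) (hq : q ≠ 0)
    (hpe : ∀ x : ℝ,
      (1 - x ^ 2) * (derivative (derivative p)).eval x
        + (β - α - (α + β + 2) * x) * (derivative p).eval x
        + (n * (n + α + β + 1) : ℝ) * p.eval x = 0)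
    (hqe : ∀ x : ℝ,
      (1 - x ^ 2) * (derivative (derivative q)).eval x
        + (β - α - (α + β + 2) * x) * (derivative q).eval x
        + (n * (n + α + β + 1) : ℝ) * q.eval x = 0) :
    ∃ c : ℝ, q = c • p :=
  jacobi_polynomial_solution_unique_general
    (.inl fun k ↦ ne_of_gt (by linarith [k.cast_nonneg (α := ℝ)])) hp hpe hqe
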